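/- (Minimum potential drop in the integer case, from the proof of Proposition on integer convergence) Suppose the influence b and all edge weights w_e are positive integers. Then for every opinion profile x ∈ Θ^n, every agent i, and every y ∈ Θ with c_i(y, x_{−i}) < c_i(x), one has Φ(x) − Φ(y, x_{−i}) ≥ δ²; that is, every asynchronous improvement step decreases the potential Φ by at least δ². -/

import Mathlib

open Finset

/-- The recommendation function with threshold λ = 1/2. -/
noncomputable def sRec (x : ℝ) : ℝ :=
  if x < -(1/2 : ℝ) then -1 else if (1/2 : ℝ) < x then 1 else 0

/-- Membership in the opinion grid Θ = {-1, -1+δ, …, 1-δ, 1}. -/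
def inGrid (δ x : ℝ) : Prop := |x| ≤ 1 ∧ ∃ k : ℤ, x = k * δ

/-- Cost to agent `i` of holding opinion `y` when the current profile is `x`.
Non-edges are modelled by weight `0`. -/
noncomputable def cost {n : ℕ} (b : ℝ) (w : Fin n → Fin n → ℝ) (i : Fin n)
    (y : ℝ) (x : Fin n → ℝ) : ℝ :=
  b * (y - sRec (x i)) ^ 2 + ∑ j, w i j * (y - x j) ^ 2

/-- The potential Φ(x) = Σ_i b(x_i − s(x_i))² + Σ_{(i,j)∈E} w_{ij}(x_i − x_j)²;
the sum over undirected edges equals half of the sum over ordered pairs. -/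
noncomputable def pot {n : ℕ} (b : ℝ) (w : Fin n → Fin n → ℝ) (x : Fin n → ℝ) : ℝ :=
  (∑ i, b * (x i - sRec (x i)) ^ 2) + (1/2) * ∑ i, ∑ j, w i j * (x i - x j) ^ 2

/-!
The recommendation `sRec y` is a point of `{-1, 0, 1}` nearest to `y`, so refreshing the mover's
recommendation can only lower the potential further, and the potential drops by at least as much as
the mover's cost. On the grid `δℤ`, which contains the recommendations, costs with integer
coefficients lie in `δ²ℤ`, and a positive element of `δ²ℤ` is at least `δ²`.
-/

lemma sRec_mem {A : AddSubgroup ℝ} (h_one : (1 : ℝ) ∈ A) (t : ℝ) : sRec t ∈ A := by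
  unfold sRec
  split_ifs
  exacts [neg_mem h_one, h_one, zero_mem A]

lemma sq_sub_sRec_self_le (y t : ℝ) : (y - sRec y) ^ 2 ≤ (y - sRec t) ^ 2 := by
  unfold sRec
  split_ifs <;> nlinarith

lemma le_of_mem_zmultiples_of_pos {G : Type*} [AddCommGroup G] [LinearOrder G]
    [IsOrderedAddMonoid G] {d g : G} (hd : 0 ≤ d) (hg : g ∈ AddSubgroup.zmultiples d)
    (hg_pos : 0 < g) : d ≤ g := by
  obtain ⟨k, rfl⟩ := AddSubgroup.mem_zmultiples_iff.mp hg
  have hk : 0 < k := by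
    by_contra! hk_nonpos
    exact hg_pos.not_ge (by simpa only [zero_zsmul] using zsmul_le_zsmul_left hd hk_nonpos)
  calc d = (1 : ℤ) • d := (one_zsmul d).symm
    _ ≤ k • d := zsmul_le_zsmul_left hd hk

lemma intCast_mul_sq_mem_zmultiples {R : Type*} [Ring R] {δ u : R} (c : ℤ)
    (hu : u ∈ AddSubgroup.zmultiples δ) :
    (c : R) * u ^ 2 ∈ AddSubgroup.zmultiples (δ ^ 2) := by
  obtain ⟨k, rfl⟩ := AddSubgroup.mem_zmultiples_iff.mp hu
  rw [smul_pow, ← zsmul_eq_mul]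
  exact zsmul_mem (AddSubgroup.zsmul_mem_zmultiples (δ ^ 2) (k ^ 2)) c

lemma one_mem_zmultiples_one_div {K : Type*} [DivisionRing K] {m : ℕ} (hm : (m : K) ≠ 0) :
    (1 : K) ∈ AddSubgroup.zmultiples (1 / m : K) := by
  refine AddSubgroup.mem_zmultiples_iff.mpr ⟨m, ?_⟩
  rw [natCast_zsmul, nsmul_eq_mul, mul_one_div_cancel hm]

lemma inGrid.mem_zmultiples {δ x : ℝ} (hx : inGrid δ x) : x ∈ AddSubgroup.zmultiples δ := by
  obtain ⟨k, rfl⟩ := hx.2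
  exact AddSubgroup.mem_zmultiples_iff.mpr ⟨k, zsmul_eq_mul δ k⟩

lemma sum_sub_sum_update {ι α M : Type*} [Fintype ι] [DecidableEq ι] [AddCommGroup M]
    (f : α → M) (x : ι → α) (i : ι) (y : α) :
    ∑ j, f (x j) - ∑ j, f (Function.update x i y j) = f (x i) - f y := by
  rw [← sum_sub_distrib, Fintype.sum_eq_single i]
  · rw [Function.update_self]
  · intro j hj
    rw [Function.update_of_ne hj, sub_self]

lemma sum_sum_eq_two_nsmul_sum_row {ι M : Type*} [Fintype ι] [AddCommMonoid M]
    {g : ι → ι → M} {i : ι} (hsymm : ∀ j, g j i = g i j) (hdiag : g i i = 0)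
    (hoff : ∀ j k, j ≠ i → k ≠ i → g j k = 0) :
    ∑ j, ∑ k, g j k = 2 • ∑ k, g i k := by
  classical
  have hrow : ∀ j ∈ univ.erase i, ∑ k, g j k = g i j := fun j hj => by
    rw [Fintype.sum_eq_single i fun k hk => hoff j k (ne_of_mem_erase hj) hk, hsymm]
  calc ∑ j, ∑ k, g j k
      = ∑ k, g i k + ∑ j ∈ univ.erase i, ∑ k, g j k := (add_sum_erase _ _ (mem_univ i)).symm
    _ = ∑ k, g i k + ∑ j ∈ univ.erase i, g i j := by rw [sum_congr rfl hrow]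
    _ = 2 • ∑ k, g i k := by rw [sum_erase univ hdiag, two_nsmul]

lemma sum_sum_mul_sq_sub_update {ι R : Type*} [Fintype ι] [DecidableEq ι] [CommRing R]
    {w : ι → ι → R} (x : ι → R) {i : ι} (y : R) (hsymm : ∀ j, w i j = w j i)
    (hdiag : w i i = 0) :
    ∑ j, ∑ k, w j k * (x j - x k) ^ 2
        - ∑ j, ∑ k, w j k * (Function.update x i y j - Function.update x i y k) ^ 2
      = 2 * (∑ k, w i k * (x i - x k) ^ 2 - ∑ k, w i k * (y - x k) ^ 2) := by
  simp only [← sum_sub_distrib]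
  rw [sum_sum_eq_two_nsmul_sum_row (i := i), nsmul_eq_mul, Nat.cast_ofNat]
  · congr 1
    refine sum_congr rfl fun k _ => ?_
    obtain rfl | hk := eq_or_ne k i
    · simp only [hdiag, zero_mul]
    · rw [Function.update_self, Function.update_of_ne hk]
  · intro j
    rw [hsymm j, sub_sq_comm (x j), sub_sq_comm (Function.update x i y j)]
  · simp only [sub_self]
  · intro j k hj hk
    rw [Function.update_of_ne hj, Function.update_of_ne hk, sub_self]

section Game

variable {n : ℕ} {b δ : ℝ} {w : Fin n → Fin n → ℝ} {x : Fin n → ℝ} {i : Fin n} {y : ℝ}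

lemma cost_mem_zmultiples (h_one : (1 : ℝ) ∈ AddSubgroup.zmultiples δ)
    (hb : ∃ B : ℤ, (B : ℝ) = b) (hw : ∀ j, ∃ W : ℤ, (W : ℝ) = w i j)
    (hx : ∀ j, x j ∈ AddSubgroup.zmultiples δ) (hy : y ∈ AddSubgroup.zmultiples δ) :
    cost b w i y x ∈ AddSubgroup.zmultiples (δ ^ 2) := by
  obtain ⟨B, rfl⟩ := hb
  choose W hW using hw
  simp only [cost, ← hW]
  exact add_mem (intCast_mul_sq_mem_zmultiples B (sub_mem hy (sRec_mem h_one _)))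
    (sum_mem fun j _ => intCast_mul_sq_mem_zmultiples (W j) (sub_mem hy (hx j)))

variable (b x y)

lemma pot_sub_pot_update (hsymm : ∀ j, w i j = w j i) (hdiag : w i i = 0) :
    pot b w x - pot b w (Function.update x i y) =
      cost b w i (x i) x - cost b w i y x
        + b * ((y - sRec (x i)) ^ 2 - (y - sRec y) ^ 2) := by
  unfold pot cost
  linear_combination sum_sub_sum_update (fun t => b * (t - sRec t) ^ 2) x i y
    + 1 / 2 * sum_sum_mul_sq_sub_update x y hsymm hdiag

lemma cost_sub_cost_le_pot_sub_pot_update (hb : 0 ≤ b) (hsymm : ∀ j, w i j = w j i)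
    (hdiag : w i i = 0) :
    cost b w i (x i) x - cost b w i y x ≤ pot b w x - pot b w (Function.update x i y) := by
  rw [pot_sub_pot_update b x y hsymm hdiag]
  exact le_add_of_nonneg_right
    (mul_nonneg hb (sub_nonneg.mpr (sq_sub_sRec_self_le y (x i))))

variable {b x y}

theorem potential_drop_integer_case_general (h_one : (1 : ℝ) ∈ AddSubgroup.zmultiples δ)
    (hb : 0 ≤ b) (hbInt : ∃ B : ℤ, (B : ℝ) = b)
    (hsymm : ∀ j, w i j = w j i) (hdiag : w i i = 0) (hwInt : ∀ j, ∃ W : ℤ, (W : ℝ) = w i j)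
    (hx : ∀ j, x j ∈ AddSubgroup.zmultiples δ) (hy : y ∈ AddSubgroup.zmultiples δ)
    (himp : cost b w i y x < cost b w i (x i) x) :
    δ ^ 2 ≤ pot b w x - pot b w (Function.update x i y) :=
  calc δ ^ 2 ≤ cost b w i (x i) x - cost b w i y x :=
        le_of_mem_zmultiples_of_pos (sq_nonneg δ)
          (sub_mem (cost_mem_zmultiples h_one hbInt hwInt hx (hx i))
            (cost_mem_zmultiples h_one hbInt hwInt hx hy))
          (sub_pos.mpr himp)
    _ ≤ pot b w x - pot b w (Function.update x i y) :=
        cost_sub_cost_le_pot_sub_pot_update b x y hb hsymm hdiag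

end Game

/-- If the influence b and all edge weights are (nonnegative) integers, every
asynchronous improvement step decreases the potential Φ by at least δ². -/
theorem potential_drop_integer_case
    {n : ℕ} (hn : 2 ≤ n) (m : ℕ) (hm : 2 ≤ m) (δ : ℝ) (hδ : δ = 1 / m)
    (b : ℝ) (hb : 0 < b) (w : Fin n → Fin n → ℝ)
    (hsym : ∀ i j, w i j = w j i) (hdiag : ∀ i, w i i = 0)
    (hw : ∀ i j, 0 ≤ w i j)
    (hbInt : ∃ B : ℕ, 0 < B ∧ (B : ℝ) = b)
    (hwInt : ∀ i j, ∃ W : ℕ, (W : ℝ) = w i j)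
    (x : Fin n → ℝ) (hx : ∀ i, inGrid δ (x i))
    (i : Fin n) (y : ℝ) (hy : inGrid δ y)
    (himp : cost b w i y x < cost b w i (x i) x) :
    pot b w x - pot b w (Function.update x i y) ≥ δ ^ 2 :=
  potential_drop_integer_case_general
    (hδ ▸ one_mem_zmultiples_one_div (Nat.cast_ne_zero.mpr (by omega))) hb.le
    (hbInt.imp' Nat.cast fun B hB => (Int.cast_natCast B).trans hB.2) (hsym i) (hdiag i)
    (fun j => (hwInt i j).imp' Nat.cast fun W hW => (Int.cast_natCast W).trans hW)
    (fun j => (hx j).mem_zmultiples) hy.mem_zmultiples himp
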